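/- Let 𝖷 = (X_1, X_2, …) be a sequence of nonempty finite sets with uniformly bounded cardinalities (i.e., there is M with |X_i| ≤ M for all i). Then the group of all bounded automorphisms of the tree 𝖷^* contains no free non-abelian subgroup. -/

import Mathlib

/-! Trees of words over a sequence `𝖷 = (X 0, X 1, …)` of alphabets, realized via
their boundary `𝖷^ω = X 0 × X 1 × ⋯`. -/

/-- Finite words of length `m` over the sequence of alphabets `X` (the `m`-th level `𝖷^m`
of the tree of words `𝖷^*`). -/
abbrev FWord (X : ℕ → Type*) (m : ℕ) := (i : Fin m) → X i

/-- The boundary `𝖷^ω` of the tree of words `𝖷^*`. -/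
abbrev FBoundary (X : ℕ → Type*) := (i : ℕ) → X i

/-- The sequence `w ∈ 𝖷^ω` extends the finite word `v` (`v` is a beginning of `w`). -/
def FExtends {X : ℕ → Type*} {m : ℕ} (w : FBoundary X) (v : FWord X m) : Prop :=
  ∀ i : Fin m, w i = v i

/-- The beginning of length `m` of a sequence `w ∈ 𝖷^ω`. -/
def wprefix {X : ℕ → Type*} (w : FBoundary X) (m : ℕ) : FWord X m := fun i => w i

/-- A permutation of the boundary `𝖷^ω` is (induced by) an automorphism of the rooted tree
`𝖷^*` if and only if for all `n` it preserves the relation "agree on the first `n` letters"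
(two sequences have the same length-`n` beginning iff their images do). -/
def IsTreeAut {X : ℕ → Type*} (f : Equiv.Perm (FBoundary X)) : Prop :=
  ∀ (n : ℕ) (w w' : FBoundary X),
    (∀ i, i < n → w i = w' i) ↔ (∀ i, i < n → f w i = f w' i)

/-- The automorphism group of the rooted tree `𝖷^*`, realized as the group of those
permutations of the boundary `𝖷^ω` induced by tree automorphisms. -/
def treeAut (X : ℕ → Type*) : Subgroup (Equiv.Perm (FBoundary X)) where
  carrier := {f | IsTreeAut f}
  one_mem' := by intro n w w'; simp
  mul_mem' := by
    intro f g hf hg n w w'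
    have h := (hg n w w').trans (hf n (g w) (g w'))
    simpa using h
  inv_mem' := by
    intro f hf n w w'
    have h := (hf n (f⁻¹ w) (f⁻¹ w')).symm
    simpa using h

/-- The restriction `f|_v` of `f` to the subtree at the vertex `v` is trivial:
`f` maps `v·u` to `(f v)·u` for every `u`. -/
def RestrictTrivial {X : ℕ → Type*} (f : Equiv.Perm (FBoundary X)) {m : ℕ}
    (v : FWord X m) : Prop :=
  ∀ w : FBoundary X, FExtends w v → ∀ i, m ≤ i → f w i = w i

/-- The set `Σ_f` of `f`-singular points of `𝖷^ω`: the points `w` such that `f|_v ≠ id`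
for every beginning `v` of `w`. -/
def singularSet {X : ℕ → Type*} (f : Equiv.Perm (FBoundary X)) : Set (FBoundary X) :=
  {w | ∀ m : ℕ, ¬ RestrictTrivial f (wprefix w m)}

/-- The parent of a vertex of `𝖷^*` (drop the last letter). -/
def wparent {X : ℕ → Type*} {n : ℕ} (v : FWord X (n + 1)) : FWord X n :=
  fun i => v ⟨i, Nat.lt_succ_of_lt i.2⟩

/-- Append one letter to a finite word. -/
def wsnoc {X : ℕ → Type*} {n : ℕ} (v : FWord X n) (x : X n) : FWord X (n + 1) :=
  fun i => if h : (i : ℕ) < n then v ⟨i, h⟩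
    else cast (congrArg X (Nat.le_antisymm (Nat.not_lt.mp h) (Nat.lt_succ_iff.mp i.2))) x

/-- The relative growth function `θ_{f,T}(n)`: the number of vertices `v` of the `n`-th
level of the rooted subtree `T` with `f|_v ≠ id`. -/
noncomputable def thetaRel {X : ℕ → Type*} (f : Equiv.Perm (FBoundary X))
    (T : ∀ n, Set (FWord X n)) (n : ℕ) : ℕ :=
  {v ∈ T n | ¬ RestrictTrivial f v}.ncard

/-- The boundary `∂T` of a rooted subtree `T ⊆ 𝖷^*` (given by its level sets). -/
def boundaryOf {X : ℕ → Type*} (T : ∀ n, Set (FWord X n)) : Set (FBoundary X) :=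
  {w | ∀ n, wprefix w n ∈ T n}

/-- Extend a finite word to a boundary point by an arbitrary fixed tail. -/
noncomputable def wext {X : ℕ → Type*} [∀ i, Nonempty (X i)] {m : ℕ} (v : FWord X m) :
    FBoundary X :=
  fun i => if h : i < m then v ⟨i, h⟩ else Classical.arbitrary (X i)

/-- The image of the vertex `v` of `𝖷^*` under (the tree automorphism inducing) `f`. -/
noncomputable def wImage {X : ℕ → Type*} [∀ i, Nonempty (X i)]
    (f : Equiv.Perm (FBoundary X)) {m : ℕ} (v : FWord X m) : FWord X m :=
  fun i => f (wext v) i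

/-- The restriction `f|_v` is finitary of depth at most `n`: `f|_{vu} = id` for every word
`u` of length `n` below `v`. -/
def FinitaryBelow {X : ℕ → Type*} (f : Equiv.Perm (FBoundary X)) {m : ℕ}
    (v : FWord X m) (n : ℕ) : Prop :=
  ∀ w : FBoundary X, FExtends w v → ∀ i, m + n ≤ i → f w i = w i

/-- `f` is a bounded automorphism with set of directions `W` and finitary depth at most `n`:
whenever `v ∈ 𝖷^*` is not a beginning of any sequence in `W`, the restriction `f|_v` is
finitary of depth at most `n`. -/
def IsBoundedWith {X : ℕ → Type*} (f : Equiv.Perm (FBoundary X))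
    (W : Set (FBoundary X)) (n : ℕ) : Prop :=
  ∀ (m : ℕ) (v : FWord X m), (∀ w ∈ W, ¬ FExtends w v) → FinitaryBelow f v n

/-- `f` is a bounded automorphism: it has a finite set of directions and a finitary depth. -/
def IsBounded {X : ℕ → Type*} (f : Equiv.Perm (FBoundary X)) : Prop :=
  ∃ (W : Set (FBoundary X)) (n : ℕ), W.Finite ∧ IsBoundedWith f W n

/-!
If a free group of rank at least two acts freely on the orbit of `w` by bounded automorphisms,
then the elements `g` for which `g • w` has a given tail from position `m + n` on can leave this
tail under a generator only if `g • w` follows one of the finitely many directions up to level `m`.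
There are at most `|W| * M ^ n` such elements, so the isoperimetric inequality of the free group
bounds the whole set independently of `m`, and cofinality classes in the orbit are finite. A
generator can change the class only at points of the finite set `W`, so, by the same inequality,
every class contains such a point: there are finitely many classes and the group is finite, which
is absurd.

Hence every `w` is fixed by some `g ≠ 1`. Near `w`, outside the fixed point itself, `g` moves only
`n + 1` letters after the point of divergence from `w`, so a bounded power of `g` fixes a whole
neighbourhood of `w`. By compactness finitely many such neighbourhoods cover the boundary. Their
pointwise stabilizers are normal in a subgroup of finite index, and nontrivial normal subgroups of
a free group meet nontrivially, so some nontrivial element acts trivially.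
-/

section FreeGroup

theorem eq_of_commute_freeGroup_of {α : Type*} {a b : α}
    (h : Commute (FreeGroup.of a) (FreeGroup.of b)) : a = b := by
  classical
  by_contra hab
  have hword := congrArg FreeGroup.toWord h.eq
  simp [FreeGroup.toWord_mul, FreeGroup.toWord_of, FreeGroup.reduce, hab] at hword

theorem isCyclic_freeGroup_of_subsingleton (α : Type*) [Subsingleton α] :
    IsCyclic (FreeGroup α) := by
  rcases isEmpty_or_nonempty α with _ | ⟨⟨a⟩⟩
  · exact isCyclic_of_subsingleton
  · have : Unique α := uniqueOfSubsingleton a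
    infer_instance

variable {G : Type*} [Group G] [IsFreeGroup G]

variable (G) in
theorem isMulTorsionFree_of_isFreeGroup : IsMulTorsionFree G :=
  (IsFreeGroup.toFreeGroup G).injective.isMulTorsionFree (IsFreeGroup.toFreeGroup G).toMonoidHom

variable (G) in
theorem isCyclic_of_isFreeGroup [IsMulCommutative G] : IsCyclic G := by
  let e := IsFreeGroup.toFreeGroup G
  have : Subsingleton (IsFreeGroup.Generators G) := ⟨fun a b => eq_of_commute_freeGroup_of <|
    e.symm.injective <| by simpa only [map_mul] using mul_comm' _ _⟩
  exact e.isCyclic.2 (isCyclic_freeGroup_of_subsingleton _)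

theorem exists_mem_zpowers_of_commute {g h : G} (hgh : Commute g h) :
    ∃ c : G, g ∈ Subgroup.zpowers c ∧ h ∈ Subgroup.zpowers c := by
  let K : Subgroup G := Subgroup.closure {g, h}
  have : IsMulCommutative K := Subgroup.isMulCommutative_closure <| by
    rintro x (rfl | rfl) y (rfl | rfl)
    exacts [rfl, hgh.eq, hgh.eq.symm, rfl]
  obtain ⟨c, hc⟩ := K.isCyclic_iff_exists_zpowers_eq_top.1 (isCyclic_of_isFreeGroup K)
  exact ⟨c, hc ▸ Subgroup.mem_closure_of_mem (by simp), hc ▸ Subgroup.mem_closure_of_mem (by simp)⟩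

theorem inf_ne_bot_of_normal {H K : Subgroup G} (hHn : H.Normal) (hKn : K.Normal)
    (hH : H ≠ ⊥) (hK : K ≠ ⊥) : H ⊓ K ≠ ⊥ := by
  have := isMulTorsionFree_of_isFreeGroup G
  intro hHK
  obtain ⟨h, hhH, hh⟩ := H.bot_or_exists_ne_one.resolve_left hH
  obtain ⟨k, hkK, hk⟩ := K.bot_or_exists_ne_one.resolve_left hK
  have hcomm : Commute h k :=
    Subgroup.commute_of_normal_of_disjoint H K hHn hKn (disjoint_iff.2 hHK) h k hhH hkK
  obtain ⟨c, ⟨i, rfl⟩, ⟨j, rfl⟩⟩ := exists_mem_zpowers_of_commute hcomm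
  have hmem : (c ^ i) ^ j ∈ H ⊓ K :=
    ⟨zpow_mem hhH j, by rw [zpow_comm]; exact zpow_mem hkK i⟩
  rw [hHK, Subgroup.mem_bot, IsMulTorsionFree.zpow_eq_one_iff] at hmem
  rcases hmem with hi | rfl
  exacts [hh hi, hk (zpow_zero c)]

theorem iInf_ne_bot_of_normal [Nontrivial G] {ι : Type*} [Finite ι] {H : ι → Subgroup G}
    (hn : ∀ i, (H i).Normal) (hH : ∀ i, H i ≠ ⊥) : ⨅ i, H i ≠ ⊥ := by
  have := Fintype.ofFinite ι
  rw [← Finset.inf_univ_eq_iInf]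
  refine (Finset.inf_induction (p := fun K : Subgroup G => K.Normal ∧ K ≠ ⊥)
    ⟨inferInstance, top_ne_bot⟩ ?_ fun i _ => ⟨hn i, hH i⟩).2
  rintro K ⟨hK, hK'⟩ L ⟨hL, hL'⟩
  exact ⟨Subgroup.normal_inf_normal K L, inf_ne_bot_of_normal hK hL hK' hL'⟩

theorem subgroupOf_ne_bot_of_finiteIndex {G : Type*} [Group G] [IsMulTorsionFree G]
    {H P : Subgroup G} [P.FiniteIndex] (hH : H ≠ ⊥) : H.subgroupOf P ≠ ⊥ := by
  obtain ⟨g, hg, hg1⟩ := H.bot_or_exists_ne_one.resolve_left hH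
  obtain ⟨k, hk, -, hgk⟩ := P.exists_pow_mem_of_index_ne_zero Subgroup.FiniteIndex.index_ne_zero g
  intro hbot
  have hone : (⟨g ^ k, hgk⟩ : P) ∈ H.subgroupOf P := H.pow_mem hg k
  rw [hbot, Subgroup.mem_bot, Subgroup.mk_eq_one, pow_eq_one_iff_left hk.ne'] at hone
  exact hg1 hone

end FreeGroup

section Cover

open MulAction
open scoped Pointwise

theorem normal_fixingSubgroup_subgroupOf {G α : Type*} [Group G] [MulAction G α] {s : Set α}
    {P : Subgroup G} (hP : P ≤ stabilizer G s) : ((fixingSubgroup G s).subgroupOf P).Normal :=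
  ⟨fun _ hh g => Set.conj_mem_fixingSubgroup (hP g.2) hh⟩

theorem not_faithfulSMul_of_finite_cover {G α ι : Type*} [Group G] [IsFreeGroup G] [Nontrivial G]
    [MulAction G α] [Finite ι] {U : ι → Set α} (hU : ⋃ i, U i = Set.univ)
    (hindex : ∀ i, (stabilizer G (U i)).FiniteIndex) (hfix : ∀ i, fixingSubgroup G (U i) ≠ ⊥) :
    ¬ FaithfulSMul G α := by
  intro hfaithful
  let P : Subgroup G := ⨅ i, stabilizer G (U i)
  have hP : P.FiniteIndex := Subgroup.finiteIndex_iInf hindex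
  have := isMulTorsionFree_of_isFreeGroup G
  have : Nontrivial P := Subgroup.nontrivial_iff.1
    (nontrivial_of_ne _ _ (subgroupOf_ne_bot_of_finiteIndex top_ne_bot))
  have hne := iInf_ne_bot_of_normal (fun i => normal_fixingSubgroup_subgroupOf (iInf_le _ i))
    fun i => subgroupOf_ne_bot_of_finiteIndex (P := P) (hfix i)
  obtain ⟨g, hg, hg1⟩ := (Subgroup.bot_or_exists_ne_one _).resolve_left hne
  refine hg1 (Subtype.ext (eq_of_smul_eq_smul fun x : α => ?_))
  obtain ⟨i, hi⟩ := Set.mem_iUnion.1 (hU.symm ▸ Set.mem_univ x)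
  have := Subgroup.mem_iInf.1 hg i
  rw [OneMemClass.coe_one, one_smul]
  exact this ⟨x, hi⟩

end Cover

section Expansion

variable {α : Type*} [Nontrivial α]

variable (α) in
theorem exists_injective_mk_mul : ∃ k : FreeGroup α → α,
    Function.Injective fun p : FreeGroup α × Bool => FreeGroup.mk [(k p.1, p.2)] * p.1 := by
  classical
  -- Choose `k x` distinct from the first generator of `x`, so that nothing cancels.
  have hexists (x : FreeGroup α) : ∃ a, ∀ b, x ∉ FreeGroup.startsWith (a, b) := by
    rcases hx : x.toWord[0]? with _ | s
    · exact ⟨Classical.arbitrary α, fun b => by simp [FreeGroup.startsWith, hx]⟩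
    · obtain ⟨a, ha⟩ := exists_ne s.1
      refine ⟨a, fun b hb => ha ?_⟩
      exact congrArg Prod.fst (Option.some.inj (Eq.trans (Eq.symm hb) hx))
  choose k hk using hexists
  refine ⟨k, fun p q hpq => ?_⟩
  have hstart (r : FreeGroup α × Bool) :
      (FreeGroup.mk [(k r.1, r.2)] * r.1).toWord[0]? = some (k r.1, r.2) :=
    FreeGroup.startsWith_mk_mul r.1 (hk r.1 _)
  have hletter : (k p.1, p.2) = (k q.1, q.2) :=
    Option.some.inj ((hstart p).symm.trans ((congrArg (·.toWord[0]?) hpq).trans (hstart q)))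
  simp only [hletter, mul_right_inj] at hpq
  exact Prod.ext hpq (Prod.mk.inj hletter).2

theorem encard_le_two_mul_encard_of_mk_mul_notMem {A B : Set (FreeGroup α)} (hA : A.Finite)
    (hB : ∀ x ∈ A, ∀ s, FreeGroup.mk [s] * x ∉ A → x ∈ B) : A.encard ≤ 2 * B.encard := by
  obtain ⟨k, hk⟩ := exists_injective_mk_mul α
  set f : FreeGroup α × Bool → FreeGroup α := fun p => FreeGroup.mk [(k p.1, p.2)] * p.1
  have hcard (S : Set (FreeGroup α)) : (f '' S ×ˢ Set.univ).encard = 2 * S.encard := by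
    rw [hk.encard_image, Set.encard_prod, Set.encard_univ, mul_comm]
    simp
  have hsub : f '' A ×ˢ Set.univ ⊆ A ∪ f '' B ×ˢ Set.univ := by
    rintro _ ⟨p, ⟨hp, -⟩, rfl⟩
    by_cases hfp : f p ∈ A
    · exact Or.inl hfp
    · exact Or.inr ⟨p, ⟨hB _ hp _ hfp, trivial⟩, rfl⟩
  have hle : A.encard + A.encard ≤ A.encard + 2 * B.encard := by
    rw [← two_mul, ← hcard, ← hcard]
    exact (Set.encard_le_encard hsub).trans (Set.encard_union_le _ _)
  exact (ENat.add_le_add_iff_left hA.encard_lt_top.ne).1 hle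

end Expansion

section Sequences

open PiNat

variable {X : ℕ → Type*}

theorem exists_forall_mem_cylinder_imp_eq {W : Set (FBoundary X)} (hW : W.Finite)
    (u : FBoundary X) : ∃ m, ∀ w ∈ W, w ∈ cylinder u m → w = u := by
  refine ⟨hW.toFinset.sup fun w => firstDiff w u + 1, fun w hw hwu => ?_⟩
  by_contra hne
  have hle := (Finset.le_sup (f := fun w => firstDiff w u + 1) (hW.mem_toFinset.2 hw)).trans
    ((mem_cylinder_iff_le_firstDiff hne _).1 hwu)
  omega

/-- The sequences that agree with `w` before position `m` and with `u` from position `m + n` on,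
so that only the `n` letters in between are free. -/
def window (w u : FBoundary X) (m n : ℕ) : Set (FBoundary X) :=
  {v | v ∈ cylinder w m ∧ ∀ i, m + n ≤ i → v i = u i}

theorem encard_window_le [∀ i, Fintype (X i)] {M : ℕ} (hM : ∀ i, Fintype.card (X i) ≤ M)
    (w u : FBoundary X) (m n : ℕ) : (window w u m n).encard ≤ (M ^ n : ℕ) := by
  have hinj : Set.InjOn (Finset.restrict (Finset.Ico m (m + n))) (window w u m n) := by
    rintro v ⟨hvw, hvu⟩ v' ⟨hvw', hvu'⟩ hvv'
    funext i
    rcases lt_or_ge i m with hi | hi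
    · exact (hvw i hi).trans (hvw' i hi).symm
    rcases lt_or_ge i (m + n) with hi' | hi'
    · exact congrFun hvv' ⟨i, Finset.mem_Ico.2 ⟨hi, hi'⟩⟩
    · exact (hvu i hi').trans (hvu' i hi').symm
  calc (window w u m n).encard
      ≤ (Set.univ : Set ((i : Finset.Ico m (m + n)) → X i)).encard :=
        Set.encard_le_encard_of_injOn (Set.mapsTo_univ _ _) hinj
    _ = (∏ i : Finset.Ico m (m + n), Fintype.card (X i) : ℕ) := by
        rw [Set.encard_univ, ENat.card_eq_coe_fintype_card, Fintype.card_pi]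
    _ ≤ (M ^ n : ℕ) := by
        rw [Nat.cast_le]
        simpa using Finset.prod_le_pow_card Finset.univ
          (fun i : Finset.Ico m (m + n) => Fintype.card (X i)) M fun i _ => hM i

theorem finite_range_cylinder [∀ i, Finite (X i)] (m : ℕ) :
    (Set.range fun x : FBoundary X => cylinder x m).Finite := by
  refine (Set.finite_range fun v : FWord X m => {x | wprefix x m = v}).subset ?_
  rintro _ ⟨x, rfl⟩
  refine ⟨wprefix x m, Set.ext fun y => ?_⟩
  simp [wprefix, funext_iff, Fin.forall_iff, mem_cylinder_iff]

end Sequences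

section Finiteness

theorem isPeriodicPt_factorial_of_encard_le {α : Type*} {f : α → α} {s : Set α}
    (hf : Set.InjOn f s) {L : ℕ} (hs : s.encard ≤ L) (hfs : Set.MapsTo f s s) {x : α} (hx : x ∈ s) :
    Function.IsPeriodicPt f L.factorial x := by
  have hfin : s.Finite := Set.finite_of_encard_le_coe hs
  have := hfin.fintype
  have hinj : Function.Injective (hfs.restrict f s s) := hfs.restrict_inj.2 hf
  have hle : Function.minimalPeriod (hfs.restrict f s s) ⟨x, hx⟩ ≤ L := by
    refine Function.minimalPeriod_le_card.trans ?_
    rwa [← Set.toFinset_card, ← Nat.cast_le (α := ℕ∞), ← Set.encard_eq_coe_toFinset_card]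
  have hdvd := Nat.dvd_factorial
    (Function.minimalPeriod_pos_of_mem_periodicPts (hinj.mem_periodicPts ⟨x, hx⟩)) hle
  have hper := (Function.isPeriodicPt_minimalPeriod (hfs.restrict f s s) ⟨x, hx⟩).trans_dvd hdvd
  exact hper.map (fun _ => rfl : Function.Semiconj ((↑) : s → α) (hfs.restrict f s s) f)

theorem encard_biUnion_le_encard_mul {ι β : Type*} {s : Set ι} (hs : s.Finite) {t : ι → Set β}
    {c : ℕ∞} (ht : ∀ i ∈ s, (t i).encard ≤ c) : (⋃ i ∈ s, t i).encard ≤ s.encard * c := by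
  obtain ⟨s, rfl⟩ := hs.exists_finset_coe
  calc (⋃ i ∈ s, t i).encard ≤ ∑ i ∈ s, (t i).encard := s.set_encard_biUnion_le t
    _ ≤ s.card • c := s.sum_le_card_nsmul _ c ht
    _ = (s : Set ι).encard * c := by rw [nsmul_eq_mul, Set.encard_coe_eq_coe_finsetCard]

end Finiteness

section TreeAction

open PiNat MulAction
open scoped Pointwise

variable {X : ℕ → Type*}

theorem IsTreeAut.apply_mem_cylinder_iff {f : Equiv.Perm (FBoundary X)} (hf : IsTreeAut f)
    {x y : FBoundary X} {m : ℕ} : f x ∈ cylinder (f y) m ↔ x ∈ cylinder y m :=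
  (hf m x y).symm

variable {G : Type*} [Group G] [MulAction G (FBoundary X)]

theorem smul_cylinder (hG : ∀ g : G, IsTreeAut (toPerm g : Equiv.Perm (FBoundary X))) (g : G)
    (x : FBoundary X) (m : ℕ) : g • cylinder x m = cylinder (g • x) m := by
  ext y
  rw [Set.mem_smul_set_iff_inv_smul_mem, ← (hG g).apply_mem_cylinder_iff, toPerm_apply,
    toPerm_apply, smul_inv_smul]

theorem finiteIndex_stabilizer_cylinder [∀ i, Finite (X i)]
    (hG : ∀ g : G, IsTreeAut (toPerm g : Equiv.Perm (FBoundary X))) (x : FBoundary X) (m : ℕ) :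
    (stabilizer G (cylinder x m)).FiniteIndex := by
  have horbit : orbit G (cylinder x m) ⊆ Set.range fun y : FBoundary X => cylinder y m := by
    rintro _ ⟨g, rfl⟩
    exact ⟨g • x, (smul_cylinder hG g x m).symm⟩
  refine ⟨?_⟩
  rw [index_stabilizer]
  exact ((Set.ncard_pos ((finite_range_cylinder m).subset horbit)).2 (nonempty_orbit _)).ne'

theorem not_faithfulSMul_of_fixingSubgroup_cylinder_ne_bot [∀ i, Finite (X i)] [IsFreeGroup G]
    [Nontrivial G] (hG : ∀ g : G, IsTreeAut (toPerm g : Equiv.Perm (FBoundary X)))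
    (hfix : ∀ w : FBoundary X, ∃ m, fixingSubgroup G (cylinder w m) ≠ ⊥) :
    ¬ FaithfulSMul G (FBoundary X) := by
  let : ∀ i, TopologicalSpace (X i) := fun _ => ⊥
  have : ∀ i, DiscreteTopology (X i) := fun _ => ⟨rfl⟩
  choose m hm using hfix
  obtain ⟨t, ht⟩ := CompactSpace.elim_nhds_subcover (fun w => cylinder w (m w)) fun w =>
    (isOpen_cylinder X w (m w)).mem_nhds (self_mem_cylinder w (m w))
  refine not_faithfulSMul_of_finite_cover (U := fun w : t => cylinder w.1 (m w)) ?_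
    (fun w => finiteIndex_stabilizer_cylinder hG w (m w)) fun w => hm w
  exact (Set.iUnion_subtype _ _).trans ht

end TreeAction

section Bounded

open PiNat Filter

variable {X : ℕ → Type*} {f : Equiv.Perm (FBoundary X)} {W : Set (FBoundary X)} {n : ℕ}

theorem IsBoundedWith.mono {W' : Set (FBoundary X)} {n' : ℕ} (hf : IsBoundedWith f W n)
    (hW : W ⊆ W') (hn : n ≤ n') : IsBoundedWith f W' n' :=
  fun m v hv w hw i hi => hf m v (fun w' hw' => hv w' (hW hw')) w hw i (by omega)

theorem exists_isBoundedWith_of_finite {ι : Type*} [Finite ι] {f : ι → Equiv.Perm (FBoundary X)}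
    (hf : ∀ i, IsBounded (f i)) :
    ∃ (W : Set (FBoundary X)) (n : ℕ), W.Finite ∧ ∀ i, IsBoundedWith (f i) W n := by
  choose W n hW hb using hf
  obtain ⟨N, hN⟩ := Finite.exists_le n
  exact ⟨⋃ i, W i, N, Set.finite_iUnion hW, fun i => (hb i).mono (Set.subset_iUnion W i) (hN i)⟩

theorem IsBoundedWith.apply_eq (hf : IsBoundedWith f W n) {v : FBoundary X} {m : ℕ}
    (hv : ∀ w ∈ W, w ∉ cylinder v m) {i : ℕ} (hi : m + n ≤ i) : f v i = v i :=
  hf m (wprefix v m) (fun w hw hwv => hv w hw fun j hj => hwv ⟨j, hj⟩) v (fun _ => rfl) i hi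

theorem IsBoundedWith.eventually_apply_eq (hf : IsBoundedWith f W n) (hW : W.Finite)
    {v : FBoundary X} (hv : v ∉ W) : ∀ᶠ i in atTop, f v i = v i := by
  obtain ⟨m, hm⟩ := exists_forall_mem_cylinder_imp_eq hW v
  filter_upwards [eventually_ge_atTop (m + n)] with i hi
  exact hf.apply_eq (fun w hw hwv => hv (hm w hw hwv ▸ hw)) hi

theorem IsBoundedWith.mapsTo_window_diff_cylinder (hf : IsBoundedWith f W n) (hft : IsTreeAut f)
    {w : FBoundary X} (hfw : f w = w) {d : ℕ} (hd : ∀ w' ∈ W, w' ∈ cylinder w d → w' = w)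
    (u : FBoundary X) :
    Set.MapsTo f (window w u d (n + 1) \ cylinder w (d + 1))
      (window w u d (n + 1) \ cylinder w (d + 1)) := by
  have hcyl (m : ℕ) (x : FBoundary X) : f x ∈ cylinder w m ↔ x ∈ cylinder w m := by
    simpa only [hfw] using hft.apply_mem_cylinder_iff (x := x) (y := w) (m := m)
  rintro x ⟨⟨hxd, hxu⟩, hxw⟩
  have hdir : ∀ w' ∈ W, w' ∉ cylinder x (d + 1) := fun w' hw' hw'x => by
    have hw'w : w' ∈ cylinder w d := mem_cylinder_iff_eq.1 hxd ▸ cylinder_anti x d.le_succ hw'x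
    rw [hd w' hw' hw'w, mem_cylinder_comm] at hw'x
    exact hxw hw'x
  refine ⟨⟨(hcyl d x).2 hxd, fun i hi => ?_⟩, (hcyl (d + 1) x).not.2 hxw⟩
  exact (hf.apply_eq hdir (by omega)).trans (hxu i hi)

theorem IsBounded.exists_pow_fix_cylinder [∀ i, Fintype (X i)] {M : ℕ}
    (hM : ∀ i, Fintype.card (X i) ≤ M) (hf : IsBounded f) (hft : IsTreeAut f)
    {w : FBoundary X} (hfw : f w = w) :
    ∃ K ≠ 0, ∃ m, ∀ u ∈ cylinder w m, (f ^ K) u = u := by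
  obtain ⟨W, n, hW, hfW⟩ := hf
  obtain ⟨m, hm⟩ := exists_forall_mem_cylinder_imp_eq hW w
  refine ⟨(M ^ (n + 1)).factorial, Nat.factorial_ne_zero _, m, fun u hu => ?_⟩
  rcases eq_or_ne u w with rfl | huw
  · exact Equiv.Perm.pow_apply_eq_self_of_apply_eq_self hfw _
  have hmd : m ≤ firstDiff u w := (mem_cylinder_iff_le_firstDiff huw m).1 hu
  have hmaps := hfW.mapsTo_window_diff_cylinder hft hfw
    (fun w' hw' hw'w => hm w' hw' (cylinder_anti w hmd hw'w)) u
  have hu' : u ∉ cylinder w (firstDiff u w + 1) := by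
    rw [mem_cylinder_iff_le_firstDiff huw]
    omega
  have hcard := (Set.encard_le_encard
    (Set.sdiff_subset (t := cylinder w (firstDiff u w + 1)))).trans
    (encard_window_le hM w u (firstDiff u w) (n + 1))
  rw [← Equiv.Perm.iterate_eq_pow]
  exact isPeriodicPt_factorial_of_encard_le f.injective.injOn hcard hmaps
    ⟨⟨mem_cylinder_firstDiff u w, fun _ _ => rfl⟩, hu'⟩

end Bounded

section FreeOrbit

open PiNat Filter MulAction

variable {X : ℕ → Type*} {α : Type*} [Nontrivial α] [MulAction (FreeGroup α) (FBoundary X)]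
  {W : Set (FBoundary X)} {n : ℕ} {w : FBoundary X}

section Fintype

variable [∀ i, Fintype (X i)] {M : ℕ}

theorem encard_setOf_smul_apply_eq_le (hM : ∀ i, Fintype.card (X i) ≤ M) (hW : W.Finite)
    (hbdd : ∀ s : α × Bool,
      IsBoundedWith (toPerm (FreeGroup.mk [s]) : Equiv.Perm (FBoundary X)) W n)
    (hw : Function.Injective fun g : FreeGroup α => g • w) (u : FBoundary X) (m : ℕ) :
    {g : FreeGroup α | ∀ i, m + n ≤ i → (g • w) i = u i}.encard ≤
      2 * (W.encard * (M ^ n : ℕ)) := by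
  have hfin : {g : FreeGroup α | ∀ i, m + n ≤ i → (g • w) i = u i}.Finite := by
    refine ((Set.finite_of_encard_le_coe (encard_window_le hM u u 0 (m + n))).preimage
      hw.injOn).subset fun g hg => ⟨by simp, fun i hi => hg i (by omega)⟩
  refine (encard_le_two_mul_encard_of_mk_mul_notMem
    (B := (fun g : FreeGroup α => g • w) ⁻¹' ⋃ w' ∈ W, window w' u m n) hfin ?_).trans ?_
  · intro g hg s hsg
    contrapose! hsg
    have hdir : ∀ w' ∈ W, w' ∉ cylinder (g • w) m := fun w' hw' hw'g =>
      hsg (Set.mem_biUnion hw' ⟨(mem_cylinder_comm _ _ _).1 hw'g, hg⟩)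
    intro i hi
    rw [mul_smul]
    exact ((hbdd s).apply_eq hdir hi).trans (hg i hi)
  · gcongr
    calc _ ≤ (⋃ w' ∈ W, window w' u m n).encard :=
          Set.encard_le_encard_of_injOn (Set.mapsTo_preimage _ _) hw.injOn
      _ ≤ W.encard * (M ^ n : ℕ) :=
          encard_biUnion_le_encard_mul hW fun w' _ => encard_window_le hM w' u m n

theorem finite_setOf_eventually_smul_apply_eq (hM : ∀ i, Fintype.card (X i) ≤ M) (hW : W.Finite)
    (hbdd : ∀ s : α × Bool,
      IsBoundedWith (toPerm (FreeGroup.mk [s]) : Equiv.Perm (FBoundary X)) W n)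
    (hw : Function.Injective fun g : FreeGroup α => g • w) (u : FBoundary X) :
    {g : FreeGroup α | ∀ᶠ i in atTop, (g • w) i = u i}.Finite := by
  by_contra hinf
  obtain ⟨T, hT, hcard⟩ :=
    Set.Infinite.exists_subset_card_eq hinf (2 * (W.ncard * M ^ n) + 1)
  obtain ⟨m, hm⟩ := eventually_atTop.1 ((eventually_all_finset T).2 fun g hg => hT hg)
  have hTm : (T : Set (FreeGroup α)) ⊆ {g | ∀ i, m + n ≤ i → (g • w) i = u i} :=
    fun g hg i hi => hm i (by omega) g hg
  have hle := (Set.encard_le_encard hTm).trans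
    (encard_setOf_smul_apply_eq_le hM hW hbdd hw u m)
  rw [Set.encard_coe_eq_coe_finsetCard, hcard, ← hW.cast_ncard_eq] at hle
  norm_cast at hle
  omega

end Fintype

theorem exists_smul_mem_of_finite_setOf_eventually_eq (hW : W.Finite)
    (hbdd : ∀ s : α × Bool,
      IsBoundedWith (toPerm (FreeGroup.mk [s]) : Equiv.Perm (FBoundary X)) W n)
    {u : FBoundary X} (hu : {g : FreeGroup α | ∀ᶠ i in atTop, (g • w) i = u i}.Finite)
    (hne : {g : FreeGroup α | ∀ᶠ i in atTop, (g • w) i = u i}.Nonempty) :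
    ∃ g : FreeGroup α, g • w ∈ W ∧ ∀ᶠ i in atTop, (g • w) i = u i := by
  by_contra hW'
  have hle := encard_le_two_mul_encard_of_mk_mul_notMem (B := ∅) hu fun g hg s hsg => by
    have hgW : g • w ∉ W := fun hgw => hW' ⟨g, hgw, hg⟩
    refine hsg ?_
    filter_upwards [(hbdd s).eventually_apply_eq hW hgW, hg] with i hi hi'
    rw [mul_smul]
    exact hi.trans hi'
  rw [Set.encard_empty, mul_zero, nonpos_iff_eq_zero, Set.encard_eq_zero] at hle
  exact hne.ne_empty hle

theorem stabilizer_ne_bot_of_isBoundedWith [∀ i, Fintype (X i)] {M : ℕ}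
    (hM : ∀ i, Fintype.card (X i) ≤ M) (hW : W.Finite)
    (hbdd : ∀ s : α × Bool,
      IsBoundedWith (toPerm (FreeGroup.mk [s]) : Equiv.Perm (FBoundary X)) W n)
    (w : FBoundary X) : stabilizer (FreeGroup α) w ≠ ⊥ := by
  intro hbot
  have hw : Function.Injective fun g : FreeGroup α => g • w := fun g h hgh => by
    have : h⁻¹ * g ∈ stabilizer (FreeGroup α) w := by
      rw [mem_stabilizer_iff, mul_smul, inv_smul_eq_iff]
      exact hgh
    rw [hbot, Subgroup.mem_bot, inv_mul_eq_one] at this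
    exact this.symm
  have hclass := finite_setOf_eventually_smul_apply_eq hM hW hbdd hw
  refine Set.infinite_univ ((((hW.preimage hw.injOn).biUnion fun e _ => hclass (e • w))).subset
    fun g _ => ?_)
  obtain ⟨e, heW, he⟩ := exists_smul_mem_of_finite_setOf_eventually_eq hW hbdd
    (hclass (g • w)) ⟨g, .of_forall fun _ => rfl⟩
  exact Set.mem_biUnion heW (he.mono fun i hi => hi.symm)

end FreeOrbit

/-- **Theorem `th:bounded`.** If the sizes of the alphabets `X i` are uniformly
bounded, then the group of bounded automorphisms of the spherically homogeneous tree `𝖷^*`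
contains no free non-abelian subgroup: there is no injective homomorphism from the free
group of rank 2 whose image consists of bounded automorphisms. -/
theorem stmt_9 (X : ℕ → Type*) [∀ i, Fintype (X i)] [∀ i, Nonempty (X i)]
    (M : ℕ) (hM : ∀ i, Fintype.card (X i) ≤ M)
    (φ : FreeGroup (Fin 2) →* Equiv.Perm (FBoundary X))
    (hφ : ∀ z, IsTreeAut (φ z) ∧ IsBounded (φ z)) :
    ¬ Function.Injective φ := by
  intro hinj
  let : MulAction (FreeGroup (Fin 2)) (FBoundary X) := MulAction.compHom _ φ
  have hfaithful : FaithfulSMul (FreeGroup (Fin 2)) (FBoundary X) :=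
    ⟨fun h => hinj (Equiv.ext h)⟩
  have hperm (g : FreeGroup (Fin 2)) : MulAction.toPerm g = φ g := Equiv.ext fun _ => rfl
  refine not_faithfulSMul_of_fixingSubgroup_cylinder_ne_bot
    (fun g => hperm g ▸ (hφ g).1) (fun w => ?_) hfaithful
  obtain ⟨W, n, hW, hbdd⟩ := exists_isBoundedWith_of_finite
    fun s : Fin 2 × Bool => (hφ (FreeGroup.mk [s])).2
  obtain ⟨g, hgw, hg⟩ := (Subgroup.bot_or_exists_ne_one _).resolve_left
    (stabilizer_ne_bot_of_isBoundedWith hM hW (fun s => hperm _ ▸ hbdd s) w)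
  obtain ⟨K, hK, m, hfix⟩ := (hφ g).2.exists_pow_fix_cylinder hM (hφ g).1 hgw
  refine ⟨m, fun hbot => hg ?_⟩
  have hgK : g ^ K ∈ fixingSubgroup (FreeGroup (Fin 2)) (PiNat.cylinder w m) := by
    rintro ⟨u, hu⟩
    exact (congrArg (· u) (map_pow φ g K)).trans (hfix u hu)
  rwa [hbot, Subgroup.mem_bot, pow_eq_one_iff_left hK] at hgK
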